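/- Let G = (V,E) be a cubic graph on n vertices with n divisible by 6, and let k be an integer with 1 ≤ k ≤ n/2. Let G_1 be the disjoint union of G and (n²−n)/6 copies of the complete bipartite graph K_{3,3}, and let G' be the complement of G_1, so G' is an (n²−4)-regular graph on n² vertices. Then G has a partition {A, B} of V into two parts with |E(A)| + |E(B)| ≤ k if and only if G' admits a partition 𝒫 of its vertex set with d(𝒫) ≥ n²/2 − 1 − 2k/n². -/

import Mathlib

open Finset

/-- The number of edges of `G` with both endpoints in `S`. -/
noncomputable def edgesIn {V : Type*} (G : SimpleGraph V) (S : Finset V) : ℕ :=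
  Set.ncard {e : Sym2 V | e ∈ G.edgeSet ∧ ∀ v ∈ e, v ∈ S}

/-- The density of the set `S` of vertices in `G`: `|E(S)|/|S|`. -/
noncomputable def density {V : Type*} (G : SimpleGraph V) (S : Finset V) : ℚ :=
  (edgesIn G S : ℚ) / (S.card : ℚ)

/-- The density of a partition: the sum of the densities of its parts. -/
noncomputable def partDensity {V : Type*} [DecidableEq V] (G : SimpleGraph V) {s : Finset V}
    (P : Finpartition s) : ℚ :=
  ∑ p ∈ P.parts, density G p

lemma sum_not_adj_lr {V X : Type*} (G : SimpleGraph V) (H : SimpleGraph X) (v : V) (x : X) :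
    (G ⊕g H).Adj (.inl v) (.inr x) ↔ False := by simp

lemma sum_not_adj_rl {V X : Type*} (G : SimpleGraph V) (H : SimpleGraph X) (v : V) (x : X) :
    (G ⊕g H).Adj (.inr x) (.inl v) ↔ False := by simp

open Classical in
noncomputable def adjCount {W : Type*} (G : SimpleGraph W) (A B : Finset W) : ℕ :=
  ∑ v ∈ A, ∑ w ∈ B, if G.Adj v w then 1 else 0

lemma two_edgesIn {W : Type*} [Fintype W] (G : SimpleGraph W) (S : Finset W) :
    2 * edgesIn G S = adjCount G S S := by
  classical
  let H : SimpleGraph W :=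
    { Adj := fun v w => G.Adj v w ∧ v ∈ S ∧ w ∈ S
      symm := ⟨fun v w h => ⟨h.1.symm, h.2.2, h.2.1⟩⟩
      loopless := ⟨fun v h => G.loopless.irrefl v h.1⟩ }
  have h1 : {e : Sym2 W | e ∈ G.edgeSet ∧ ∀ v ∈ e, v ∈ S} = (H.edgeFinset : Set (Sym2 W)) := by
    ext e
    induction e with
    | _ v w => simp [H]
  have h2 : edgesIn G S = H.edgeFinset.card := by
    unfold edgesIn
    rw [h1, Set.ncard_coe_finset]
  rw [h2, ← H.sum_degrees_eq_twice_card_edges]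
  unfold adjCount
  rw [← Finset.sum_subset (Finset.subset_univ S)]
  · refine Finset.sum_congr rfl fun v hv => ?_
    rw [← SimpleGraph.card_neighborFinset_eq_degree, ← Finset.card_filter]
    congr 1
    ext w
    simp [H, hv, and_comm]
  · intro v _ hv
    rw [← SimpleGraph.card_neighborFinset_eq_degree, Finset.card_eq_zero]
    ext w
    simp [H, hv]

lemma edgesIn_compl {W : Type*} [Fintype W] (G : SimpleGraph W) (S : Finset W) :
    2 * edgesIn Gᶜ S + 2 * edgesIn G S + S.card = S.card * S.card := by
  classical
  rw [two_edgesIn, two_edgesIn]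
  unfold adjCount
  rw [← Finset.sum_add_distrib, Finset.card_eq_sum_ones, ← Finset.sum_add_distrib,
    Finset.sum_mul]
  refine Finset.sum_congr rfl fun v hv => ?_
  have : (1 : ℕ) = ∑ w ∈ S, if v = w then 1 else 0 := by simp [hv]
  rw [one_mul]
  conv_lhs => rw [this]
  rw [← Finset.sum_add_distrib, ← Finset.sum_add_distrib]
  refine Finset.sum_congr rfl fun w hw => ?_
  by_cases h : v = w
  · subst h; simp
  · by_cases h' : G.Adj v w <;> simp [h, h', hv, SimpleGraph.compl_adj]

lemma adjCount_comm {W : Type*} (G : SimpleGraph W) (A B : Finset W) :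
    adjCount G A B = adjCount G B A := by
  classical
  unfold adjCount
  rw [Finset.sum_comm]
  simp [SimpleGraph.adj_comm]

lemma edgesIn_cut {W : Type*} [Fintype W] [DecidableEq W] (G : SimpleGraph W) (A B : Finset W)
    (hd : Disjoint A B) (hu : A ∪ B = univ) (hc : ∀ v, adjCount G {v} univ = 3) :
    2 * edgesIn G A + adjCount G A B = 3 * A.card := by
  classical
  rw [two_edgesIn]
  unfold adjCount
  rw [← Finset.sum_add_distrib, Finset.card_eq_sum_ones, Finset.mul_sum]
  refine Finset.sum_congr rfl fun v hv => ?_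
  rw [← Finset.sum_union hd, hu]
  simpa [adjCount] using hc v

lemma density_compl {W : Type*} [Fintype W] (G : SimpleGraph W) (S : Finset W)
    (hS : S.Nonempty) :
    density Gᶜ S = ((S.card : ℚ) - 1) / 2 - (edgesIn G S : ℚ) / S.card := by
  have h := edgesIn_compl G S
  have h0 : (S.card : ℚ) ≠ 0 := by
    exact_mod_cast hS.card_pos.ne'
  have h' : 2 * (edgesIn Gᶜ S : ℚ) + 2 * edgesIn G S + S.card = S.card * S.card := by
    exact_mod_cast h
  unfold density
  field_simp
  linarith

lemma partDensity_compl {W : Type*} [Fintype W] [DecidableEq W] (G : SimpleGraph W)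
    (P : Finpartition (univ : Finset W)) :
    partDensity Gᶜ P = ((Fintype.card W : ℚ) - P.parts.card) / 2
      - ∑ p ∈ P.parts, (edgesIn G p : ℚ) / p.card := by
  unfold partDensity
  rw [Finset.sum_congr rfl fun p hp => density_compl G p (P.nonempty_of_mem_parts hp),
    Finset.sum_sub_distrib, ← Finset.sum_div, Finset.sum_sub_distrib]
  have := P.sum_card_parts
  rw [Finset.card_univ] at this
  rw [← this]
  simp

lemma arith_fwd (a b eA eB c N k : ℚ) (ha : 0 < a) (hb : 0 < b) (hN : a + b = N)
    (hA : 2 * eA + c = 3 * a) (hB : 2 * eB + c = 3 * b) (hc : 0 ≤ c) (hk : eA + eB ≤ k) :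
    eA / a + eB / b ≤ 2 * k / N := by
  have hNp : 0 < N := by linarith
  have e1 : eA = (3 * a - c) / 2 := by linarith
  have e2 : eB = (3 * b - c) / 2 := by linarith
  have : eA / a + eB / b ≤ 2 * (eA + eB) / N := by
    have h : 2 * (eA + eB) / N - (eA / a + eB / b) = c * (a - b) ^ 2 / (2 * a * b * N) := by
      rw [e1, e2, ← hN]
      have : a + b ≠ 0 := by linarith
      field_simp
      ring
    have h2 : 0 ≤ c * (a - b) ^ 2 / (2 * a * b * N) := by positivity
    linarith
  refine this.trans ?_
  gcongr

lemma arith_bwd (a b eA eB c n k : ℚ) (hn : 6 ≤ n) (ha : 0 < a) (hb : 0 < b)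
    (hN : a + b = n ^ 2)
    (hA : 2 * eA + c = 3 * a) (hB : 2 * eB + c = 3 * b) (hA0 : 0 ≤ eA) (hB0 : 0 ≤ eB)
    (hk0 : 0 ≤ k) (hk : 2 * k ≤ n)
    (h : eA / a + eB / b ≤ 2 * k / n ^ 2) : eA + eB < k + 1 := by
  wlog hab : b ≤ a generalizing a b eA eB
  · rw [add_comm]
    exact this b a eB eA hb ha (by linarith) hB hA hB0 hA0 (by linarith) (by linarith)
  have hNp : 0 < n ^ 2 := by positivity
  -- t := (a-b)/2 ; eA ≤ 2k a / n^2
  obtain ⟨t, ht⟩ : ∃ t, a - b = 2 * t := ⟨(a - b) / 2, by ring⟩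
  have ht0 : 0 ≤ t := by linarith
  have hx : eA = eB + 3 * t := by linarith
  obtain ⟨p, hp⟩ : ∃ p, p = eA / a := ⟨_, rfl⟩
  obtain ⟨q, hq⟩ : ∃ q, q = eB / b := ⟨_, rfl⟩
  obtain ⟨r, hr⟩ : ∃ r, r = 2 * k / n ^ 2 := ⟨_, rfl⟩
  have hp0 : 0 ≤ p := by rw [hp]; positivity
  have hq0 : 0 ≤ q := by rw [hq]; positivity
  rw [← hp, ← hq, ← hr] at h
  have hpa : eA = p * a := by rw [hp]; field_simp
  have hqb : eB = q * b := by rw [hq]; field_simp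
  have hr' : r * n ^ 2 = 2 * k := by rw [hr]; field_simp
  have ha' : a = n ^ 2 / 2 + t := by linarith
  have hb' : b = n ^ 2 / 2 - t := by linarith
  have hrn : r * n ≤ 1 := by
    by_contra hcon
    push Not at hcon
    nlinarith
  have h3t : 3 * t ≤ n := by
    have : 3 * t ≤ p * a := by linarith
    have h2 : p * a ≤ r * n ^ 2 := by
      apply mul_le_mul <;> nlinarith
    linarith
  -- eA + eB = (p+q) n^2/2 + t (p - q) ≤ k + t r
  have h5 : eA + eB = (p + q) * (n ^ 2 / 2) + t * (p - q) := by
    rw [hpa, hqb, ha', hb']; ring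
  have h6 : (p + q) * (n ^ 2 / 2) ≤ r * (n ^ 2 / 2) := by gcongr
  have h7 : t * (p - q) ≤ t * r := by
    apply mul_le_mul_of_nonneg_left _ ht0; linarith
  have hr0 : 0 ≤ r := by linarith
  have h8 : 3 * (t * r) ≤ 1 := by nlinarith
  linarith

lemma sumGraph_cubic {V : Type*} [Fintype V] (G : SimpleGraph V) [DecidableRel G.Adj]
    (hcubic : ∀ v : V, G.degree v = 3) (m : ℕ) (v : V ⊕ Fin m × (Fin 3 ⊕ Fin 3)) :
    adjCount (G ⊕g ((⊥ : SimpleGraph (Fin m)) □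
      completeBipartiteGraph (Fin 3) (Fin 3))) {v} univ = 3 := by
  classical
  unfold adjCount
  rw [Finset.sum_singleton, Fintype.sum_sum_type]
  rcases v with v | ⟨i, x⟩
  · have := hcubic v
    rw [← SimpleGraph.card_neighborFinset_eq_degree] at this
    simp only [SimpleGraph.sum_adj_inl, sum_not_adj_lr, if_false, sum_const_zero, add_zero]
    rw [← Finset.card_filter, ← this]
    congr 1
    ext w
    simp
  · simp only [SimpleGraph.sum_adj_inr, sum_not_adj_rl, if_false, sum_const_zero, zero_add]
    rw [Fintype.sum_prod_type, Finset.sum_eq_single i]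
    · rcases x with x | x <;> simp only [SimpleGraph.boxProd_adj] <;>
        rw [Fintype.sum_sum_type] <;> simp
    · intro j _ hj
      simp [SimpleGraph.boxProd_adj, hj.symm]
    · simp

lemma edgesIn_sum_le {V X : Type*} [Fintype V] [Fintype X] (G : SimpleGraph V)
    (H : SimpleGraph X) (S : Finset (V ⊕ X)) :
    edgesIn G S.toLeft ≤ edgesIn (G ⊕g H) S := by
  classical
  have h1 := two_edgesIn G S.toLeft
  have h2 := two_edgesIn (G ⊕g H) S
  have : adjCount G S.toLeft S.toLeft ≤ adjCount (G ⊕g H) S S := by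
    rw [← S.toLeft_disjSum_toRight]
    unfold adjCount
    simp only [Finset.sum_disjSum, SimpleGraph.sum_adj_inl, toLeft_disjSum]
    refine le_trans ?_ (Nat.le_add_right _ _)
    refine Finset.sum_le_sum fun v _ => Nat.le_add_right _ _
  omega

lemma edgesIn_sum_eq {V X : Type*} [Fintype V] [Fintype X] (G : SimpleGraph V)
    (H : SimpleGraph X) (A : Finset V) (B : Finset X)
    (hB : ∀ x ∈ B, ∀ y ∈ B, ¬ H.Adj x y) :
    edgesIn (G ⊕g H) (A.disjSum B) = edgesIn G A := by
  classical
  have h1 := two_edgesIn G A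
  have h2 := two_edgesIn (G ⊕g H) (A.disjSum B)
  have : adjCount (G ⊕g H) (A.disjSum B) (A.disjSum B) = adjCount G A A := by
    unfold adjCount
    simp only [Finset.sum_disjSum, SimpleGraph.sum_adj_inl, SimpleGraph.sum_adj_inr,
      sum_not_adj_lr, sum_not_adj_rl, if_false, sum_const_zero, add_zero, zero_add]
    rw [Nat.add_eq_left]
    refine Finset.sum_eq_zero fun x hx => Finset.sum_eq_zero fun y hy => ?_
    rw [if_neg (hB x hx y hy)]
  omega

lemma box_indep {m : ℕ} (p q : Fin m × (Fin 3 ⊕ Fin 3)) (h : p.2.isLeft = q.2.isLeft) :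
    ¬ ((⊥ : SimpleGraph (Fin m)) □ completeBipartiteGraph (Fin 3) (Fin 3)).Adj p q := by
  obtain ⟨i, x | x⟩ := p <;> obtain ⟨j, y | y⟩ := q <;> simp [SimpleGraph.boxProd_adj] at h ⊢

theorem stmt17 {V : Type*} [Fintype V] [DecidableEq V] (G : SimpleGraph V) [DecidableRel G.Adj]
    (n k : ℕ) (hn : Fintype.card V = n) (h6 : 6 ∣ n)
    (hcubic : ∀ v : V, G.degree v = 3)
    (hk1 : 1 ≤ k) (hk2 : 2 * k ≤ n)
    -- `G₁` is the disjoint union of `G` and `(n² − n)/6` copies of `K_{3,3}`,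
    -- and `G'` is the complement of `G₁`:
    (G₁ : SimpleGraph (V ⊕ Fin ((n ^ 2 - n) / 6) × (Fin 3 ⊕ Fin 3)))
    (hG₁ : G₁ = G ⊕g ((⊥ : SimpleGraph (Fin ((n ^ 2 - n) / 6))) □
      completeBipartiteGraph (Fin 3) (Fin 3)))
    (G' : SimpleGraph (V ⊕ Fin ((n ^ 2 - n) / 6) × (Fin 3 ⊕ Fin 3)))
    (hG' : G' = G₁ᶜ) :
    (∃ A B : Finset V, Disjoint A B ∧ A ∪ B = univ ∧ edgesIn G A + edgesIn G B ≤ k) ↔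
      ∃ P : Finpartition (univ : Finset (V ⊕ Fin ((n ^ 2 - n) / 6) × (Fin 3 ⊕ Fin 3))),
        (n : ℚ) ^ 2 / 2 - 1 - 2 * (k : ℚ) / (n : ℚ) ^ 2 ≤ partDensity G' P := by
  have hn6 : 6 ≤ n := Nat.le_of_dvd (by omega) h6
  have hle : n * 6 ≤ n ^ 2 := by nlinarith
  have hdvd : 6 ∣ n ^ 2 - n := Nat.dvd_sub (Dvd.dvd.pow h6 (by norm_num)) h6
  have hcub1 : ∀ v, adjCount G₁ {v} univ = 3 := by
    intro v; rw [hG₁]; exact sumGraph_cubic G hcubic _ v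
  generalize hm : (n ^ 2 - n) / 6 = m at *
  have hm6 : n + 6 * m = n ^ 2 := by omega
  have hm0 : 0 < m := by omega
  have hcard : Fintype.card (V ⊕ Fin m × (Fin 3 ⊕ Fin 3)) = n ^ 2 := by
    simp [hn]; omega
  have hnQ : (6 : ℚ) ≤ n := by exact_mod_cast hn6
  have hkQ : 2 * (k : ℚ) ≤ n := by exact_mod_cast hk2
  have key : ∀ A B : Finset (V ⊕ Fin m × (Fin 3 ⊕ Fin 3)), Disjoint A B → A ∪ B = univ →
      ∃ c : ℚ, 0 ≤ c ∧ (A.card : ℚ) + B.card = (n : ℚ) ^ 2 ∧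
        2 * (edgesIn G₁ A : ℚ) + c = 3 * A.card ∧ 2 * (edgesIn G₁ B : ℚ) + c = 3 * B.card := by
    intro A B hd hu
    refine ⟨adjCount G₁ A B, by positivity, ?_, ?_, ?_⟩
    · rw [← Nat.cast_add, ← Finset.card_union_of_disjoint hd, hu, Finset.card_univ, hcard]
      push_cast; rfl
    · exact_mod_cast edgesIn_cut G₁ A B hd hu hcub1
    · rw [adjCount_comm]
      exact_mod_cast edgesIn_cut G₁ B A hd.symm (by rw [Finset.union_comm, hu]) hcub1
  subst hG'
  constructor
  · rintro ⟨A, B, hd, hu, hk⟩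
    let X : Finset (Fin m × (Fin 3 ⊕ Fin 3)) := univ.filter fun p => p.2.isLeft
    let Y : Finset (Fin m × (Fin 3 ⊕ Fin 3)) := univ.filter fun p => ¬ p.2.isLeft
    have hA : edgesIn G₁ (A.disjSum X) = edgesIn G A := by
      rw [hG₁]
      apply edgesIn_sum_eq
      intro p hp q hq
      apply box_indep
      have h1 := (Finset.mem_filter.mp hp).2
      have h2 := (Finset.mem_filter.mp hq).2
      rw [h1, h2]
    have hB : edgesIn G₁ (B.disjSum Y) = edgesIn G B := by
      rw [hG₁]
      apply edgesIn_sum_eq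
      intro p hp q hq
      apply box_indep
      have h1 := (Finset.mem_filter.mp hp).2
      have h2 := (Finset.mem_filter.mp hq).2
      rw [Bool.eq_false_of_not_eq_true h1, Bool.eq_false_of_not_eq_true h2]
    have hd' : Disjoint (A.disjSum X) (B.disjSum Y) := by
      rw [Finset.disjoint_left]
      rintro (v | p) h1 h2
      · simp only [Finset.inl_mem_disjSum] at h1 h2
        exact Finset.disjoint_left.mp hd h1 h2
      · simp only [Finset.inr_mem_disjSum] at h1 h2
        exact (Finset.mem_filter.mp h2).2 (Finset.mem_filter.mp h1).2
    have hu' : A.disjSum X ∪ B.disjSum Y = univ := by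
      ext (v | p)
      · have : v ∈ A ∪ B := by rw [hu]; simp
        simpa using this
      · simp only [Finset.mem_union, Finset.inr_mem_disjSum, X, Y, Finset.mem_filter,
          Finset.mem_univ, true_and, iff_true]
        have := em (p.2.isLeft = true)
        tauto
    have hAne : (A.disjSum X).Nonempty := ⟨Sum.inr (⟨0, hm0⟩, Sum.inl 0), by simp [X]⟩
    have hBne : (B.disjSum Y).Nonempty := ⟨Sum.inr (⟨0, hm0⟩, Sum.inr 0), by simp [Y]⟩
    have hne : A.disjSum X ≠ B.disjSum Y := by
      intro h
      rw [h, disjoint_self] at hd'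
      exact hBne.ne_empty hd'
    obtain ⟨c, hc, hN, e1, e2⟩ := key _ _ hd' hu'
    let P : Finpartition (univ : Finset (V ⊕ Fin m × (Fin 3 ⊕ Fin 3))) :=
      { parts := {A.disjSum X, B.disjSum Y}
        supIndep := by
          rw [Finset.supIndep_pair hne]
          exact hd'
        sup_parts := by
          simpa using hu'
        bot_notMem := by
          simp only [Finset.mem_insert, Finset.mem_singleton, Finset.bot_eq_empty, not_or]
          exact ⟨hAne.ne_empty.symm, hBne.ne_empty.symm⟩ }
    refine ⟨P, ?_⟩
    have hP : P.parts = {A.disjSum X, B.disjSum Y} := rfl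
    rw [partDensity_compl, hP, Finset.sum_pair hne, Finset.card_pair hne, hcard]
    have := arith_fwd _ _ _ _ c _ (k : ℚ) (by exact_mod_cast hAne.card_pos)
      (by exact_mod_cast hBne.card_pos) hN e1 e2 hc (by rw [hA, hB]; exact_mod_cast hk)
    push_cast
    linarith
  · rintro ⟨P, hP⟩
    rw [partDensity_compl, hcard] at hP
    push_cast at hP
    have hkn : 2 * (k : ℚ) / (n : ℚ) ^ 2 ≤ 1 / 6 := by
      rw [div_le_div_iff₀ (by positivity) (by norm_num)]
      nlinarith
    have hs0 : 0 ≤ ∑ p ∈ P.parts, (edgesIn G₁ p : ℚ) / p.card :=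
      Finset.sum_nonneg fun p _ => by positivity
    have hlt : P.parts.card < 3 := by
      by_contra hcon
      push Not at hcon
      have : (3 : ℚ) ≤ P.parts.card := by exact_mod_cast hcon
      linarith
    have hne0 : P.parts.card ≠ 0 := by
      intro h0
      have h1 := P.sum_card_parts
      rw [Finset.card_eq_zero.mp h0, Finset.card_univ, hcard] at h1
      simp at h1
      omega
    have hne1 : P.parts.card ≠ 1 := by
      intro h1
      obtain ⟨S, hS⟩ := Finset.card_eq_one.mp h1
      have hSu : S = univ := by
        have := P.sup_parts
        rw [hS] at this
        simpa using this
      obtain ⟨c, hc, hN, e1, e2⟩ := key S ∅ (by simp) (by simpa using hSu)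
      have hc0 : c = 0 := by
        simp at e2
        have : (0 : ℚ) ≤ edgesIn G₁ ∅ := by positivity
        linarith
      rw [hS] at hP
      simp only [Finset.sum_singleton, Finset.card_singleton, Nat.cast_one] at hP
      have hn2 : (0 : ℚ) < (n : ℚ) ^ 2 := by positivity
      simp at hN
      have : (edgesIn G₁ S : ℚ) / S.card = 3 / 2 := by
        rw [div_eq_div_iff (by rw [hN]; positivity) (by norm_num)]
        linarith
      linarith
    have h2 : P.parts.card = 2 := by omega
    obtain ⟨A, B, hne, hAB⟩ := Finset.card_eq_two.mp h2
    have hAm : A ∈ P.parts := by simp [hAB]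
    have hBm : B ∈ P.parts := by simp [hAB]
    have hd : Disjoint A B := P.disjoint hAm hBm hne
    have hu : A ∪ B = univ := by
      have := P.sup_parts
      rw [hAB] at this
      simpa using this
    rw [hAB, Finset.sum_pair hne, Finset.card_pair hne] at hP
    obtain ⟨c, hc, hN, e1, e2⟩ := key A B hd hu
    have hlt := arith_bwd _ _ _ _ c (n : ℚ) (k : ℚ) hnQ
      (by exact_mod_cast (P.nonempty_of_mem_parts hAm).card_pos)
      (by exact_mod_cast (P.nonempty_of_mem_parts hBm).card_pos) hN e1 e2
      (by positivity) (by positivity) (by positivity) hkQ (by push_cast at hP; linarith)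
    have hlt' : edgesIn G₁ A + edgesIn G₁ B < k + 1 := by exact_mod_cast hlt
    refine ⟨A.toLeft, B.toLeft, ?_, ?_, ?_⟩
    · rw [Finset.disjoint_left] at hd ⊢
      intro v h1 h2
      exact hd (Finset.mem_toLeft.mp h1) (Finset.mem_toLeft.mp h2)
    · ext v
      have : Sum.inl v ∈ A ∪ B := by rw [hu]; simp
      simpa using this
    · have i1 := edgesIn_sum_le G ((⊥ : SimpleGraph (Fin m)) □
        completeBipartiteGraph (Fin 3) (Fin 3)) A
      have i2 := edgesIn_sum_le G ((⊥ : SimpleGraph (Fin m)) □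
        completeBipartiteGraph (Fin 3) (Fin 3)) B
      rw [← hG₁] at i1 i2
      omega
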